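/- Suppose 1 < p < ∞, 0 < s ≤ 1, let p' be the conjugate exponent of p, and let g be holomorphic on the unit disc D. If the Volterra operator T_g maps the Besov space B^p into Q_s, then g ∈ Q_{s,log,1/p'}. -/

import Mathlib

open MeasureTheory Metric Complex Real Filter Set

noncomputable section

/-- `f` is holomorphic on the open unit disc. -/
def HolOn (f : ℂ → ℂ) : Prop := DifferentiableOn ℂ f (Metric.ball (0:ℂ) 1)

/-- The normalized Lebesgue area measure on `ℂ` (so the unit disc has total mass 1). -/
def dA : Measure ℂ := (ENNReal.ofReal π)⁻¹ • volume

/-- Bounded holomorphic functions on the unit disc. -/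
def Hinf : Set (ℂ → ℂ) :=
  {f | HolOn f ∧ ∃ C : ℝ, ∀ z ∈ Metric.ball (0:ℂ) 1, ‖f z‖ ≤ C}

/-- The Bloch space. -/
def Bloch : Set (ℂ → ℂ) :=
  {f | HolOn f ∧ ∃ C : ℝ, ∀ z ∈ Metric.ball (0:ℂ) 1,
      (1 - ‖z‖ ^ 2) * ‖deriv f z‖ ≤ C}

/-- The little Bloch space: `(1-|z|²)|f'(z)| → 0` as `|z| → 1⁻`. -/
def littleBloch : Set (ℂ → ℂ) :=
  {f | HolOn f ∧ ∀ ε : ℝ, 0 < ε → ∃ r : ℝ, r < 1 ∧ ∀ z ∈ Metric.ball (0:ℂ) 1,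
      r < ‖z‖ → (1 - ‖z‖ ^ 2) * ‖deriv f z‖ < ε}

/-- The `α`-logarithmic Bloch space. -/
def BlochLog (α : ℝ) : Set (ℂ → ℂ) :=
  {f | HolOn f ∧ ∃ C : ℝ, ∀ z ∈ Metric.ball (0:ℂ) 1,
      (1 - ‖z‖ ^ 2) * (Real.log (2 / (1 - ‖z‖ ^ 2))) ^ α *
        ‖deriv f z‖ ≤ C}

/-- The Besov space `B¹`: holomorphic `f` with `∫_D |f''| dA < ∞`. -/
def Besov1 : Set (ℂ → ℂ) :=
  {f | HolOn f ∧ ∫⁻ z in Metric.ball (0:ℂ) 1,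
      ENNReal.ofReal (‖deriv (deriv f) z‖) ∂dA < ⊤}

/-- The Besov space `Bᵖ` (`1 < p < ∞`): `∫_D (1-|z|)^(p-2) |f'(z)|^p dA(z) < ∞`. -/
def Besov (p : ℝ) : Set (ℂ → ℂ) :=
  {f | HolOn f ∧ ∫⁻ z in Metric.ball (0:ℂ) 1,
      ENNReal.ofReal ((1 - ‖z‖) ^ (p - 2) * ‖deriv f z‖ ^ p) ∂dA < ⊤}

open scoped Classical in
/-- The Besov space `Bᵖ` for all `1 ≤ p < ∞` (with the special definition at `p = 1`). -/
def BesovFull (p : ℝ) : Set (ℂ → ℂ) := if p = 1 then Besov1 else Besov p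

/-- The Möbius transformation `φ_a(z) = (a-z)/(1 - conj a · z)`. -/
def phi (a z : ℂ) : ℂ := (a - z) / (1 - (starRingEnd ℂ) a * z)

/-- The space `Q_s`. -/
def Qs (s : ℝ) : Set (ℂ → ℂ) :=
  {f | HolOn f ∧ ⨆ a ∈ Metric.ball (0:ℂ) 1, ∫⁻ z in Metric.ball (0:ℂ) 1,
      ENNReal.ofReal (‖deriv f z‖ ^ 2 *
        (1 - ‖phi a z‖ ^ 2) ^ s) ∂dA < ⊤}

/-- The space `Q_{s,log,α}`. -/
def QsLog (s α : ℝ) : Set (ℂ → ℂ) :=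
  {f | HolOn f ∧ ⨆ a ∈ Metric.ball (0:ℂ) 1,
      (ENNReal.ofReal ((Real.log (2 / (1 - ‖a‖))) ^ (2 * α)) *
        ∫⁻ z in Metric.ball (0:ℂ) 1,
          ENNReal.ofReal (‖deriv f z‖ ^ 2 *
            (1 - ‖phi a z‖ ^ 2) ^ s) ∂dA) < ⊤}

/-- The Volterra operator `T_g(f)(z) = ∫_0^z g'(ξ) f(ξ) dξ` (along the segment from 0 to z). -/
def Tg (g f : ℂ → ℂ) : ℂ → ℂ :=
  fun z => z * ∫ t in (0:ℝ)..1, deriv g ((t : ℂ) * z) * f ((t : ℂ) * z)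

/-- The companion operator `I_g(f)(z) = ∫_0^z g(ξ) f'(ξ) dξ` (along the segment from 0 to z). -/
def Ig (g f : ℂ → ℂ) : ℂ → ℂ :=
  fun z => z * ∫ t in (0:ℝ)..1, g ((t : ℂ) * z) * deriv f ((t : ℂ) * z)

/-- The multiplication operator `M_g(f) = g · f`. -/
def Mg (g f : ℂ → ℂ) : ℂ → ℂ := fun z => g z * f z

/-- `T` maps `X` into `Y`. -/
def MapsInto (T : (ℂ → ℂ) → (ℂ → ℂ)) (X Y : Set (ℂ → ℂ)) : Prop :=
  ∀ f ∈ X, T f ∈ Y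

/-- The Hardy space `H^q`. -/
def Hardy (q : ℝ) : Set (ℂ → ℂ) :=
  {f | HolOn f ∧ ∃ C : ℝ, ∀ r : ℝ, 0 < r → r < 1 →
      (1 / (2 * π)) * ∫ t in (0:ℝ)..(2 * π),
        ‖f ((r : ℂ) * Complex.exp ((t : ℂ) * Complex.I))‖ ^ q ≤ C}

/-- An inner function: bounded holomorphic with radial boundary values of modulus 1 a.e. -/
def IsInner (g : ℂ → ℂ) : Prop :=
  g ∈ Hinf ∧ ∀ᵐ t : ℝ ∂(volume.restrict (Set.Ioc (0:ℝ) (2 * π))),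
    Filter.Tendsto (fun r : ℝ => ‖g ((r : ℂ) * Complex.exp ((t : ℂ) * Complex.I))‖)
      (nhdsWithin 1 (Set.Iio 1)) (nhds 1)

/-- `X` has the f-property (division by inner functions). -/
def FProperty (X : Set (ℂ → ℂ)) : Prop :=
  ∀ h ∈ X, ∀ g : ℂ → ℂ, IsInner g →
    (fun z => h z / g z) ∈ Hardy 1 → (fun z => h z / g z) ∈ X

/-- The space of multipliers `M(X,Y)`. -/
def Mult (X Y : Set (ℂ → ℂ)) : Set (ℂ → ℂ) :=
  {g | HolOn g ∧ ∀ f ∈ X, (fun z => g z * f z) ∈ Y}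

end

/-!
The functions `log (2 / (1 - conj a * z))` have nonnegative real part on the disc and, multiplied by
`(log (2 / (1 - |a|))) ^ (-1 / p)`, they are bounded in `B^p` by a Forelli–Rudin estimate. If the
functional defining `Q_{s,log,1/p'}` were unbounded at `g`, it would grow arbitrarily fast along
some sequence `a_k`. Superposing the corresponding test functions with weights `2 ^ (-k - 1)` gives
one `f` in `B^p` (by Jensen), and since nonnegative real parts do not cancel, `|f|` dominates all
the weighted test functions at once. So the single condition `T_g f ∈ Q_s` bounds the growth of the
functional along the whole sequence, with no need for a closed graph argument.
-/

open scoped ENNReal ComplexConjugate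

theorem integral_Ioi_add_rpow_neg {p x : ℝ} (hp : 1 < p) (hx : 0 < x) :
    ∫ t in Ioi (0 : ℝ), (x + t) ^ (-p) = x ^ (1 - p) / (p - 1) := by
  have preimage_Ioi : (x + ·) ⁻¹' Ioi x = Ioi (0 : ℝ) := by simp
  rw [← preimage_Ioi, (measurePreserving_add_left volume x).setIntegral_preimage_emb
    (measurableEmbedding_addLeft x) (· ^ (-p)), integral_Ioi_rpow_of_lt (by linarith) hx,
    ← neg_div_neg_eq, neg_neg]
  ring_nf

theorem lintegral_add_abs_rpow_neg {p x : ℝ} (hp : 1 < p) (hx : 0 < x) :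
    ∫⁻ θ : ℝ, .ofReal ((x + |θ|) ^ (-p)) = .ofReal (2 / (p - 1) * x ^ (1 - p)) := by
  have : 0 < p - 1 := sub_pos.2 hp
  have integral_eq : ∫ θ : ℝ, (x + |θ|) ^ (-p) = 2 / (p - 1) * x ^ (1 - p) := by
    rw [integral_comp_abs (f := fun t ↦ (x + t) ^ (-p)), integral_Ioi_add_rpow_neg hp hx]
    ring
  have integrable : Integrable fun θ : ℝ ↦ (x + |θ|) ^ (-p) :=
    .of_integral_ne_zero (by rw [integral_eq]; positivity)
  rw [← integral_eq, ofReal_integral_eq_lintegral_ofReal integrable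
    (.of_forall fun θ ↦ by positivity)]

theorem add_abs_le_mul_norm_one_sub_mul_exp {ρ θ : ℝ} (hρ₀ : 0 ≤ ρ) (hρ₁ : ρ ≤ 1) (hθ : |θ| ≤ π) :
    1 - ρ + |θ| ≤ 5 * ‖1 - ρ * Complex.exp (θ * I)‖ := by
  have radial : 1 - ρ ≤ ‖1 - ρ * Complex.exp (θ * I)‖ := by
    simpa [Complex.norm_exp_ofReal_mul_I, abs_of_nonneg hρ₀] using
      norm_sub_norm_le 1 (ρ * Complex.exp (θ * I))
  have chord_le : ‖Complex.exp (θ * I) - 1‖ ≤ ‖1 - ρ * Complex.exp (θ * I)‖ + (1 - ρ) := by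
    have split : Complex.exp (θ * I) - 1 =
        ((1 - ρ : ℝ) : ℂ) * Complex.exp (θ * I) - (1 - ρ * Complex.exp (θ * I)) := by
      push_cast; ring
    rw [split, add_comm]
    refine (norm_sub_le _ _).trans_eq ?_
    rw [norm_mul, Complex.norm_exp_ofReal_mul_I, Complex.norm_of_nonneg (sub_nonneg.2 hρ₁), mul_one]
  have arc_le_chord : |θ| / 2 ≤ ‖Complex.exp (θ * I) - 1‖ := by
    have jordan := Real.mul_abs_le_abs_sin (x := θ / 2) (by rw [abs_div, abs_two]; linarith)
    rw [mul_comm (θ : ℂ), Complex.norm_exp_I_mul_ofReal_sub_one, Real.norm_eq_abs, abs_mul, abs_two]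
    have hπ : 1 / 2 ≤ 2 / π := by
      rw [div_le_div_iff₀ two_pos pi_pos]; linarith [pi_le_four]
    rw [abs_div, abs_two] at jordan
    nlinarith [abs_nonneg θ]
  linarith

theorem setLIntegral_norm_one_sub_mul_exp_rpow_neg_le {p ρ : ℝ} (hp : 1 < p) (hρ₀ : 0 ≤ ρ)
    (hρ₁ : ρ < 1) :
    ∫⁻ θ in Ioo (-π) π, .ofReal (‖1 - ρ * Complex.exp (θ * I)‖ ^ (-p)) ≤
      .ofReal (5 ^ p * (2 / (p - 1)) * (1 - ρ) ^ (1 - p)) := by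
  have pointwise : ∀ θ ∈ Ioo (-π) π, ‖1 - ρ * Complex.exp (θ * I)‖ ^ (-p) ≤
      5 ^ p * (1 - ρ + |θ|) ^ (-p) := by
    intro θ hθ
    have pos : 0 < 1 - ρ + |θ| := add_pos_of_pos_of_nonneg (sub_pos.2 hρ₁) (abs_nonneg θ)
    calc ‖1 - ρ * Complex.exp (θ * I)‖ ^ (-p)
        ≤ ((1 - ρ + |θ|) / 5) ^ (-p) := by
          refine Real.rpow_le_rpow_of_nonpos (by positivity) ?_ (by linarith)
          linarith [add_abs_le_mul_norm_one_sub_mul_exp hρ₀ hρ₁.le (abs_le.2 ⟨hθ.1.le, hθ.2.le⟩)]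
      _ = 5 ^ p * (1 - ρ + |θ|) ^ (-p) := by
          rw [Real.div_rpow pos.le (by norm_num), Real.rpow_neg (by norm_num : (0 : ℝ) ≤ 5),
            div_inv_eq_mul, mul_comm]
  calc ∫⁻ θ in Ioo (-π) π, .ofReal (‖1 - ρ * Complex.exp (θ * I)‖ ^ (-p))
      ≤ ∫⁻ θ in Ioo (-π) π, .ofReal (5 ^ p * (1 - ρ + |θ|) ^ (-p)) :=
        setLIntegral_mono' measurableSet_Ioo fun θ hθ ↦ ENNReal.ofReal_le_ofReal (pointwise θ hθ)
    _ ≤ ∫⁻ θ : ℝ, .ofReal (5 ^ p) * .ofReal ((1 - ρ + |θ|) ^ (-p)) := by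
        simp_rw [← ENNReal.ofReal_mul (show (0 : ℝ) ≤ 5 ^ p by positivity)]
        exact setLIntegral_le_lintegral _ _
    _ = .ofReal (5 ^ p * (2 / (p - 1)) * (1 - ρ) ^ (1 - p)) := by
        rw [lintegral_const_mul _ (by fun_prop), lintegral_add_abs_rpow_neg hp (sub_pos.2 hρ₁),
          ← ENNReal.ofReal_mul (by positivity), mul_assoc]

theorem lintegral_Ioc_zero_rpow_sub_two {p δ : ℝ} (hp : 1 < p) (hδ : 0 ≤ δ) :
    ∫⁻ t in Ioc 0 δ, .ofReal (t ^ (p - 2)) = .ofReal (δ ^ (p - 1) / (p - 1)) := by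
  have integrable : IntegrableOn (fun t : ℝ ↦ t ^ (p - 2)) (Ioc 0 δ) :=
    (intervalIntegrable_iff_integrableOn_Ioc_of_le hδ).1
      (intervalIntegral.intervalIntegrable_rpow' (by linarith))
  rw [← ofReal_integral_eq_lintegral_ofReal integrable
      (ae_restrict_of_forall_mem measurableSet_Ioc fun t ht ↦ Real.rpow_nonneg ht.1.le _),
    ← intervalIntegral.integral_of_le hδ, integral_rpow (.inl (by linarith)),
    show p - 2 + 1 = p - 1 by ring, Real.zero_rpow (by linarith), sub_zero]

theorem lintegral_Ioc_inv {a b : ℝ} (ha : 0 < a) (hab : a ≤ b) :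
    ∫⁻ t in Ioc a b, .ofReal t⁻¹ = .ofReal (Real.log (b / a)) := by
  have zero_notMem : (0 : ℝ) ∉ uIcc a b := notMem_uIcc_of_lt ha (ha.trans_le hab)
  have integrable : IntegrableOn (fun t : ℝ ↦ t⁻¹) (Ioc a b) :=
    (intervalIntegrable_iff_integrableOn_Ioc_of_le hab).1
      (intervalIntegrable_inv_iff.2 (.inr zero_notMem))
  rw [← ofReal_integral_eq_lintegral_ofReal integrable
      (ae_restrict_of_forall_mem measurableSet_Ioc fun t ht ↦ inv_nonneg.2 (ha.trans ht.1).le),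
    ← intervalIntegral.integral_of_le hab, integral_inv zero_notMem]

theorem lintegral_rpow_mul_max_rpow {p δ : ℝ} (hp : 1 < p) (hδ₀ : 0 < δ) (hδ₁ : δ ≤ 1) :
    ∫⁻ t in Ioc 0 1, .ofReal (t ^ (p - 2) * max δ t ^ (1 - p)) =
      .ofReal (1 / (p - 1) + Real.log (1 / δ)) := by
  have below : ∫⁻ t in Ioc 0 δ, .ofReal (t ^ (p - 2) * max δ t ^ (1 - p)) =
      .ofReal (1 / (p - 1)) := by
    calc ∫⁻ t in Ioc 0 δ, .ofReal (t ^ (p - 2) * max δ t ^ (1 - p))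
        = ∫⁻ t in Ioc 0 δ, .ofReal (t ^ (p - 2)) * .ofReal (δ ^ (1 - p)) := by
          refine setLIntegral_congr_fun measurableSet_Ioc fun t ht ↦ ?_
          rw [max_eq_left ht.2, ENNReal.ofReal_mul (Real.rpow_nonneg ht.1.le _)]
      _ = .ofReal (1 / (p - 1)) := by
          rw [lintegral_mul_const _ (by fun_prop), lintegral_Ioc_zero_rpow_sub_two hp hδ₀.le,
            ← ENNReal.ofReal_mul (div_nonneg (by positivity) (by linarith)), div_mul_eq_mul_div,
            ← Real.rpow_add hδ₀, sub_add_sub_cancel', sub_self, Real.rpow_zero]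
  have above : ∫⁻ t in Ioc δ 1, .ofReal (t ^ (p - 2) * max δ t ^ (1 - p)) =
      .ofReal (Real.log (1 / δ)) := by
    rw [← lintegral_Ioc_inv hδ₀ hδ₁]
    refine setLIntegral_congr_fun measurableSet_Ioc fun t ht ↦ ?_
    rw [max_eq_right ht.1.le, ← Real.rpow_add (hδ₀.trans ht.1), ← Real.rpow_neg_one]
    ring_nf
  rw [← Ioc_union_Ioc_eq_Ioc hδ₀.le hδ₁,
    lintegral_union measurableSet_Ioc (Ioc_disjoint_Ioc_of_le le_rfl), below, above,
    ENNReal.ofReal_add (by simpa using hp.le) (Real.log_nonneg ((one_le_div hδ₀).2 hδ₁))]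

theorem lintegral_one_sub_rpow_mul_one_sub_mul_rpow_le {p ρ : ℝ} (hp : 1 < p) (hρ₀ : 0 ≤ ρ)
    (hρ₁ : ρ < 1) :
    ∫⁻ r in Ioo 0 1, .ofReal ((1 - r) ^ (p - 2) * (1 - ρ * r) ^ (1 - p)) ≤
      .ofReal (1 / (p - 1) + Real.log (1 / (1 - ρ))) := by
  calc ∫⁻ r in Ioo 0 1, .ofReal ((1 - r) ^ (p - 2) * (1 - ρ * r) ^ (1 - p))
      ≤ ∫⁻ r in Ioo 0 1, .ofReal ((1 - r) ^ (p - 2) * max (1 - ρ) (1 - r) ^ (1 - p)) := by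
        refine setLIntegral_mono' measurableSet_Ioo fun r hr ↦ ENNReal.ofReal_le_ofReal ?_
        have r_pos : 0 < 1 - r := sub_pos.2 hr.2
        refine mul_le_mul_of_nonneg_left ?_ (by positivity)
        refine Real.rpow_le_rpow_of_nonpos (lt_max_of_lt_right r_pos) ?_ (by linarith)
        exact max_le (by nlinarith [hr.1, hr.2]) (by nlinarith [hr.1])
    _ = ∫⁻ t in Ioo 0 1, .ofReal (t ^ (p - 2) * max (1 - ρ) t ^ (1 - p)) := by
        have preimage_Ioo : (1 - ·) ⁻¹' Ioo 0 1 = Ioo (0 : ℝ) 1 := by simp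
        nth_rw 1 [← preimage_Ioo]
        exact (Measure.measurePreserving_sub_left volume (1 : ℝ)).setLIntegral_comp_preimage
          (f := fun t ↦ .ofReal (t ^ (p - 2) * max (1 - ρ) t ^ (1 - p)))
          measurableSet_Ioo (by fun_prop)
    _ = .ofReal (1 / (p - 1) + Real.log (1 / (1 - ρ))) := by
        rw [setLIntegral_congr Ioo_ae_eq_Ioc,
          lintegral_rpow_mul_max_rpow hp (sub_pos.2 hρ₁) (sub_le_self 1 hρ₀)]

theorem lintegral_ball_zero_eq_lintegral_polar {f : ℂ → ℝ≥0∞} (hf : Measurable f) (R : ℝ) :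
    ∫⁻ z in ball 0 R, f z = ∫⁻ r in Ioo 0 R, .ofReal r *
      ∫⁻ θ in Ioo (-π) π, f (r * Complex.exp (θ * I)) := by
  let F : ℝ × ℝ → ℝ≥0∞ := fun q ↦ .ofReal q.1 * f (q.1 * Complex.exp (q.2 * I))
  have measurable_F : Measurable F := by unfold F; fun_prop
  have polar_indicator : ∀ q ∈ Ioi (0 : ℝ) ×ˢ Ioo (-π) π,
      ENNReal.ofReal q.1 • (ball 0 R).indicator f (Complex.polarCoord.symm q) =
        (Iio R ×ˢ univ).indicator F q := by
    rintro ⟨r, θ⟩ ⟨hr, -⟩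
    classical
    have mem_iff : Complex.polarCoord.symm (r, θ) ∈ ball 0 R ↔ (r, θ) ∈ Iio R ×ˢ univ := by
      rw [mem_ball_zero_iff, Complex.norm_polarCoord_symm, abs_of_pos hr]
      simp
    simp only [Set.indicator_apply, mem_iff, smul_eq_mul, mul_ite, mul_zero]
    rw [Complex.polarCoord_symm_apply, ofReal_cos, ofReal_sin, ← Complex.exp_mul_I]
  rw [← lintegral_indicator measurableSet_ball, ← Complex.lintegral_comp_polarCoord_symm,
    polarCoord_target, setLIntegral_congr_fun (measurableSet_Ioi.prod measurableSet_Ioo)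
      polar_indicator, setLIntegral_indicator (measurableSet_Iio.prod .univ), prod_inter_prod,
    univ_inter, inter_comm, Ioi_inter_Iio, Measure.volume_eq_prod,
    setLIntegral_prod _ measurable_F.aemeasurable]
  exact lintegral_congr fun r ↦ lintegral_const_mul' _ _ ENNReal.ofReal_ne_top

theorem exists_linearIsometryEquiv_mul_eq_norm_mul (a : ℂ) :
    ∃ e : ℂ ≃ₗᵢ[ℝ] ℂ, ∀ z, a * z = ‖a‖ * e z := by
  refine ⟨rotation (Circle.exp a.arg), fun z ↦ ?_⟩
  rw [rotation_apply, Circle.coe_exp, ← mul_assoc, Complex.norm_mul_exp_arg_mul_I]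

theorem lintegral_ball_norm_mul_eq (F : ℝ → ℂ → ℝ≥0∞) (a : ℂ) (R : ℝ) :
    ∫⁻ z in ball 0 R, F ‖z‖ (a * z) = ∫⁻ z in ball 0 R, F ‖z‖ (‖a‖ * z) := by
  obtain ⟨e, he⟩ := exists_linearIsometryEquiv_mul_eq_norm_mul a
  have rotate := e.measurePreserving.setLIntegral_comp_preimage_emb
    e.toHomeomorph.measurableEmbedding (fun z ↦ F ‖z‖ (‖a‖ * z)) (ball 0 R)
  rw [← rotate, e.preimage_ball, e.symm.map_zero]
  simp only [he, e.norm_map]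

/-- The logarithmic case of the Forelli–Rudin estimates. -/
theorem lintegral_one_sub_norm_rpow_mul_norm_one_sub_mul_rpow_neg_le {p : ℝ} {a : ℂ} (hp : 1 < p)
    (ha : ‖a‖ < 1) :
    ∫⁻ z in ball 0 1, .ofReal ((1 - ‖z‖) ^ (p - 2) * ‖1 - a * z‖ ^ (-p)) ≤
      .ofReal (5 ^ p * (2 / (p - 1)) * (1 / (p - 1) + Real.log (1 / (1 - ‖a‖)))) := by
  have hc : 0 ≤ 5 ^ p * (2 / (p - 1)) :=
    mul_nonneg (by positivity) (div_nonneg two_pos.le (sub_pos.2 hp).le)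
  have circle_le : ∀ r ∈ Ioo (0 : ℝ) 1,
      .ofReal r * ∫⁻ θ in Ioo (-π) π, .ofReal ((1 - ‖(r * Complex.exp (θ * I) : ℂ)‖) ^ (p - 2) *
        ‖1 - ‖a‖ * (r * Complex.exp (θ * I))‖ ^ (-p)) ≤
      ENNReal.ofReal (5 ^ p * (2 / (p - 1))) *
        .ofReal ((1 - r) ^ (p - 2) * (1 - ‖a‖ * r) ^ (1 - p)) := by
    intro r hr
    have norm_eq (θ : ℝ) : ‖(r * Complex.exp (θ * I) : ℂ)‖ = r := by
      rw [norm_mul, Complex.norm_exp_ofReal_mul_I, Complex.norm_of_nonneg hr.1.le, mul_one]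
    have weight_nonneg : 0 ≤ (1 - r) ^ (p - 2) := Real.rpow_nonneg (sub_pos.2 hr.2).le _
    simp only [norm_eq, ENNReal.ofReal_mul weight_nonneg, ← mul_assoc, ← Complex.ofReal_mul]
    rw [lintegral_const_mul _ (by fun_prop)]
    calc .ofReal r * (.ofReal ((1 - r) ^ (p - 2)) * ∫⁻ θ in Ioo (-π) π,
            .ofReal (‖1 - (‖a‖ * r : ℝ) * Complex.exp (θ * I)‖ ^ (-p)))
        ≤ 1 * (.ofReal ((1 - r) ^ (p - 2)) *
            .ofReal (5 ^ p * (2 / (p - 1)) * (1 - ‖a‖ * r) ^ (1 - p))) := by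
          gcongr
          · exact ENNReal.ofReal_le_one.2 hr.2.le
          · exact setLIntegral_norm_one_sub_mul_exp_rpow_neg_le hp
              (mul_nonneg (norm_nonneg a) hr.1.le) (mul_lt_one_of_nonneg_of_lt_one_left
                (norm_nonneg a) ha hr.2.le)
      _ = _ := by rw [one_mul, ENNReal.ofReal_mul hc, mul_left_comm]; ring
  rw [lintegral_ball_norm_mul_eq
      (fun r w ↦ .ofReal ((1 - r) ^ (p - 2) * ‖1 - w‖ ^ (-p))),
    lintegral_ball_zero_eq_lintegral_polar (by fun_prop)]
  calc _ ≤ _ := setLIntegral_mono' measurableSet_Ioo circle_le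
    _ ≤ _ := by
      rw [lintegral_const_mul _ (by fun_prop), ENNReal.ofReal_mul hc]
      gcongr
      exact lintegral_one_sub_rpow_mul_one_sub_mul_rpow_le hp (norm_nonneg a) ha

/-- The integral defining the Besov space `B^p`, in `[0, ∞]`. -/
noncomputable def besovEnergy (p : ℝ) (f : ℂ → ℂ) : ℝ≥0∞ :=
  ∫⁻ z in ball 0 1, .ofReal ((1 - ‖z‖) ^ (p - 2) * ‖deriv f z‖ ^ p) ∂dA

/-- The integral at the point `a` in the supremum defining `Q_s`, in `[0, ∞]`. -/
noncomputable def qEnergy (s : ℝ) (a : ℂ) (f : ℂ → ℂ) : ℝ≥0∞ :=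
  ∫⁻ z in ball 0 1, .ofReal (‖deriv f z‖ ^ 2 * (1 - ‖phi a z‖ ^ 2) ^ s) ∂dA

/-- The logarithmic weight `log (2 / (1 - |a|))` of the spaces `Q_{s,log,α}`. -/
noncomputable def logWeight (a : ℂ) : ℝ := Real.log (2 / (1 - ‖a‖))

/-- The function `z ↦ log (2 / (1 - conj a * z))`, written as `-log` of the reciprocal. -/
noncomputable def logKernel (a z : ℂ) : ℂ := -Complex.log ((1 - conj a * z) / 2)

/-- The test function `logWeight a ^ β * logKernel a`; with `β = -1 / p` it is normalised in the
Besov space `B^p`. -/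
noncomputable def logTestFun (β : ℝ) (a z : ℂ) : ℂ := (logWeight a ^ β : ℝ) * logKernel a z

theorem mem_Besov_iff {p : ℝ} {f : ℂ → ℂ} : f ∈ Besov p ↔ HolOn f ∧ besovEnergy p f < ⊤ :=
  Iff.rfl

theorem mem_Qs_iff {s : ℝ} {f : ℂ → ℂ} :
    f ∈ Qs s ↔ HolOn f ∧ ⨆ a ∈ ball (0 : ℂ) 1, qEnergy s a f < ⊤ :=
  Iff.rfl

theorem mem_QsLog_iff {s α : ℝ} {f : ℂ → ℂ} : f ∈ QsLog s α ↔
    HolOn f ∧ ⨆ a ∈ ball (0 : ℂ) 1, .ofReal (logWeight a ^ (2 * α)) * qEnergy s a f < ⊤ :=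
  Iff.rfl

theorem dA_le_volume : dA ≤ volume := by
  refine Measure.le_iff.2 fun A _ ↦ mul_le_of_le_one_left' (ENNReal.inv_le_one.2 ?_)
  exact ENNReal.one_le_ofReal.2 (by linarith [pi_gt_three])

section Kernel

variable {a z : ℂ}

theorem log_two_le_logWeight (ha : ‖a‖ < 1) : Real.log 2 ≤ logWeight a := by
  refine Real.log_le_log two_pos ((le_div_iff₀ (sub_pos.2 ha)).2 ?_)
  linarith [norm_nonneg a]

theorem logWeight_pos (ha : ‖a‖ < 1) : 0 < logWeight a :=
  (Real.log_pos one_lt_two).trans_le (log_two_le_logWeight ha)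

theorem one_sub_norm_le_norm_one_sub_conj_mul (ha : ‖a‖ ≤ 1) : 1 - ‖z‖ ≤ ‖1 - conj a * z‖ := by
  have reverse_triangle := norm_sub_norm_le 1 (conj a * z)
  rw [norm_mul, RCLike.norm_conj, norm_one] at reverse_triangle
  nlinarith [norm_nonneg z]

theorem norm_one_sub_conj_mul_le_two (ha : ‖a‖ ≤ 1) (hz : ‖z‖ ≤ 1) : ‖1 - conj a * z‖ ≤ 2 := by
  have triangle := norm_sub_le 1 (conj a * z)
  rw [norm_mul, RCLike.norm_conj, norm_one] at triangle
  linarith [mul_le_one₀ ha (norm_nonneg z) hz]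

theorem norm_one_sub_conj_mul_pos (ha : ‖a‖ ≤ 1) (hz : ‖z‖ < 1) : 0 < ‖1 - conj a * z‖ :=
  (sub_pos.2 hz).trans_le (one_sub_norm_le_norm_one_sub_conj_mul ha)

theorem one_sub_conj_mul_re_pos (ha : ‖a‖ ≤ 1) (hz : ‖z‖ < 1) : 0 < (1 - conj a * z).re := by
  have re_le := Complex.re_le_norm (conj a * z)
  rw [norm_mul, RCLike.norm_conj] at re_le
  rw [Complex.sub_re, Complex.one_re]
  nlinarith [norm_nonneg z]

theorem hasDerivAt_logKernel (ha : ‖a‖ ≤ 1) (hz : ‖z‖ < 1) :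
    HasDerivAt (logKernel a) (conj a / (1 - conj a * z)) z := by
  have mem_slitPlane : (1 - conj a * z) / 2 ∈ slitPlane :=
    .inl (by simpa using one_sub_conj_mul_re_pos ha hz)
  have inner : HasDerivAt (fun w ↦ (1 - conj a * w) / 2) (-conj a / 2) z := by
    simpa using (((hasDerivAt_id z).const_mul (conj a)).const_sub 1).div_const 2
  refine (inner.clog mem_slitPlane).neg.congr_deriv ?_
  rw [neg_div, neg_div, neg_neg, div_div_div_cancel_right₀ two_ne_zero]

theorem holOn_logKernel (ha : ‖a‖ ≤ 1) : HolOn (logKernel a) := fun _ hz ↦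
  (hasDerivAt_logKernel ha (mem_ball_zero_iff.1 hz)).differentiableAt.differentiableWithinAt

theorem re_logKernel (a z : ℂ) : (logKernel a z).re = Real.log (2 / ‖1 - conj a * z‖) := by
  rw [logKernel, Complex.neg_re, Complex.log_re, norm_div, Complex.norm_two, ← Real.log_inv,
    inv_div]

theorem re_logKernel_nonneg (ha : ‖a‖ ≤ 1) (hz : ‖z‖ < 1) : 0 ≤ (logKernel a z).re := by
  rw [re_logKernel]
  exact Real.log_nonneg ((one_le_div (norm_one_sub_conj_mul_pos ha hz)).2
    (norm_one_sub_conj_mul_le_two ha hz.le))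

theorem norm_logKernel_le {R : ℝ} (ha : ‖a‖ ≤ 1) (hR : R < 1) (hz : ‖z‖ ≤ R) :
    ‖logKernel a z‖ ≤ Real.log (2 / (1 - R)) + π := by
  have hz₁ : ‖z‖ < 1 := hz.trans_lt hR
  have re_le : (logKernel a z).re ≤ Real.log (2 / (1 - R)) := by
    rw [re_logKernel]
    have := one_sub_norm_le_norm_one_sub_conj_mul (z := z) ha
    exact Real.log_le_log (div_pos two_pos (norm_one_sub_conj_mul_pos ha hz₁))
      (div_le_div_of_nonneg_left two_pos.le (sub_pos.2 hR) (by linarith))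
  have im_le : |(logKernel a z).im| ≤ π := by
    rw [logKernel, Complex.neg_im, abs_neg, Complex.log_im]
    exact Complex.abs_arg_le_pi _
  calc ‖logKernel a z‖ ≤ |(logKernel a z).re| + |(logKernel a z).im| :=
        Complex.norm_le_abs_re_add_abs_im _
    _ ≤ Real.log (2 / (1 - R)) + π := by
        rw [abs_of_nonneg (re_logKernel_nonneg ha hz₁)]
        exact add_le_add re_le im_le

theorem holOn_logTestFun (β : ℝ) (ha : ‖a‖ ≤ 1) : HolOn (logTestFun β a) :=
  (holOn_logKernel ha).const_mul _

theorem re_logTestFun (β : ℝ) (a z : ℂ) :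
    (logTestFun β a z).re = logWeight a ^ β * (logKernel a z).re :=
  re_ofReal_mul _ _

theorem re_logTestFun_nonneg (β : ℝ) (ha : ‖a‖ < 1) (hz : ‖z‖ < 1) :
    0 ≤ (logTestFun β a z).re := by
  rw [re_logTestFun]
  exact mul_nonneg (Real.rpow_nonneg (logWeight_pos ha).le _) (re_logKernel_nonneg ha.le hz)

end Kernel

theorem besovEnergy_const_mul (p : ℝ) (c : ℂ) (f : ℂ → ℂ) :
    besovEnergy p (fun z ↦ c * f z) = .ofReal (‖c‖ ^ p) * besovEnergy p f := by
  rw [besovEnergy, besovEnergy, ← lintegral_const_mul' _ _ ENNReal.ofReal_ne_top]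
  refine lintegral_congr fun z ↦ ?_
  rw [deriv_const_mul_field, norm_mul, Real.mul_rpow (norm_nonneg c) (norm_nonneg _),
    ← ENNReal.ofReal_mul (by positivity), mul_left_comm]

theorem besovEnergy_logKernel_le {p : ℝ} {a : ℂ} (hp : 1 < p) (ha : ‖a‖ < 1) :
    besovEnergy p (logKernel a) ≤
      .ofReal (5 ^ p * (2 / (p - 1)) * (1 / (p - 1) + Real.log (1 / (1 - ‖a‖)))) := by
  have deriv_bound : ∀ z ∈ ball (0 : ℂ) 1, ‖deriv (logKernel a) z‖ ^ p ≤
      ‖1 - conj a * z‖ ^ (-p) := by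
    intro z hz
    rw [(hasDerivAt_logKernel ha.le (mem_ball_zero_iff.1 hz)).deriv, norm_div, RCLike.norm_conj,
      Real.rpow_neg (norm_nonneg _), ← Real.inv_rpow (norm_nonneg _), div_eq_mul_inv]
    gcongr
    exact mul_le_of_le_one_left (by positivity) ha.le
  calc besovEnergy p (logKernel a)
      ≤ ∫⁻ z in ball 0 1, .ofReal ((1 - ‖z‖) ^ (p - 2) * ‖deriv (logKernel a) z‖ ^ p) :=
        lintegral_mono' (Measure.restrict_mono_measure dA_le_volume _) le_rfl
    _ ≤ ∫⁻ z in ball 0 1, .ofReal ((1 - ‖z‖) ^ (p - 2) * ‖1 - conj a * z‖ ^ (-p)) := by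
        refine setLIntegral_mono' measurableSet_ball fun z hz ↦ ENNReal.ofReal_le_ofReal ?_
        have : ‖z‖ < 1 := mem_ball_zero_iff.1 hz
        exact mul_le_mul_of_nonneg_left (deriv_bound z hz)
          (Real.rpow_nonneg (sub_nonneg.2 this.le) _)
    _ ≤ .ofReal (5 ^ p * (2 / (p - 1)) * (1 / (p - 1) + Real.log (1 / (1 - ‖a‖)))) := by
        rw [← RCLike.norm_conj a] at ha ⊢
        exact lintegral_one_sub_norm_rpow_mul_norm_one_sub_mul_rpow_neg_le hp ha

theorem exists_forall_besovEnergy_logTestFun_le {p : ℝ} (hp : 1 < p) :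
    ∃ C : ℝ, ∀ a : ℂ, ‖a‖ < 1 → besovEnergy p (logTestFun (-(1 / p)) a) ≤ .ofReal C := by
  have hp1 : 0 < p - 1 := sub_pos.2 hp
  have : 0 < Real.log 2 := Real.log_pos one_lt_two
  refine ⟨5 ^ p * (2 / (p - 1)) * (1 / ((p - 1) * Real.log 2) + 1), fun a ha ↦ ?_⟩
  have weight_pos : 0 < logWeight a := logWeight_pos ha
  have log_le : Real.log (1 / (1 - ‖a‖)) ≤ logWeight a := by
    have : 0 < 1 - ‖a‖ := sub_pos.2 ha
    exact Real.log_le_log (by positivity) (by gcongr; norm_num)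
  have const_le : 1 / (p - 1) ≤ 1 / ((p - 1) * Real.log 2) * logWeight a := by
    rw [div_mul_eq_mul_div, one_mul, div_le_div_iff₀ hp1 (by positivity)]
    nlinarith [log_two_le_logWeight ha]
  have normalisation : ‖((logWeight a ^ (-(1 / p)) : ℝ) : ℂ)‖ ^ p = (logWeight a)⁻¹ := by
    rw [Complex.norm_of_nonneg (by positivity), ← Real.rpow_mul weight_pos.le, neg_mul,
      one_div_mul_cancel (by linarith), Real.rpow_neg_one]
  calc besovEnergy p (logTestFun (-(1 / p)) a)
      = .ofReal (logWeight a)⁻¹ * besovEnergy p (logKernel a) := by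
        rw [← normalisation, ← besovEnergy_const_mul]; rfl
    _ ≤ .ofReal (logWeight a)⁻¹ * .ofReal (5 ^ p * (2 / (p - 1)) *
          ((1 / ((p - 1) * Real.log 2) + 1) * logWeight a)) := by
        gcongr
        refine (besovEnergy_logKernel_le hp ha).trans (ENNReal.ofReal_le_ofReal ?_)
        gcongr
        linarith
    _ = .ofReal (5 ^ p * (2 / (p - 1)) * (1 / ((p - 1) * Real.log 2) + 1)) := by
        rw [← ENNReal.ofReal_mul (by positivity)]
        congr 1
        field_simp

theorem rpow_tsum_mul_le_tsum_mul_rpow {ι : Type*} {p : ℝ} (hp : 1 ≤ p) {w : ι → ℝ≥0∞}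
    (hw : ∑' i, w i ≤ 1) (f : ι → ℝ≥0∞) :
    (∑' i, w i * f i) ^ p ≤ ∑' i, w i * f i ^ p := by
  have p_pos : 0 < p := one_pos.trans_le hp
  refine (ENNReal.le_rpow_inv_iff p_pos).1 ?_
  rw [ENNReal.tsum_eq_iSup_sum]
  refine iSup_le fun t ↦ ?_
  calc ∑ i ∈ t, w i * f i
      ≤ (∑ i ∈ t, w i) ^ (1 - p⁻¹) * (∑ i ∈ t, w i * f i ^ p) ^ p⁻¹ :=
        ENNReal.inner_le_weight_mul_Lp_of_nonneg t hp w f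
    _ ≤ 1 * (∑' i, w i * f i ^ p) ^ p⁻¹ := by
        gcongr
        · exact ENNReal.rpow_le_one ((ENNReal.sum_le_tsum t).trans hw)
            (sub_nonneg.2 (inv_le_one_of_one_le₀ hp))
        · exact ENNReal.sum_le_tsum t
    _ = (∑' i, w i * f i ^ p) ^ p⁻¹ := one_mul _

theorem hasSum_deriv_of_summableLocallyUniformlyOn {ι : Type*} {F : ι → ℂ → ℂ} {U : Set ℂ}
    (hU : IsOpen U) (hF : ∀ i, DifferentiableOn ℂ (F i) U)
    (hsum : SummableLocallyUniformlyOn F U) {z : ℂ} (hz : z ∈ U) :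
    HasSum (fun i ↦ deriv (F i) z) (deriv (fun w ↦ ∑' i, F i w) z) := by
  have partial_sums := hasSumLocallyUniformlyOn_iff_tendstoLocallyUniformlyOn.1
    hsum.hasSumLocallyUniformlyOn
  have deriv_tendsto := (partial_sums.deriv
    (.of_forall fun t ↦ DifferentiableOn.fun_sum fun i _ ↦ hF i) hU).tendsto_at hz
  refine deriv_tendsto.congr fun t ↦ ?_
  exact deriv_fun_sum fun i _ ↦ (hF i).differentiableAt (hU.mem_nhds hz)

theorem besovEnergy_tsum_le {ι : Type*} [Countable ι] {p : ℝ} (hp : 1 ≤ p) {w : ι → ℂ}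
    (hw : ∑' i, ‖w i‖ₑ ≤ 1) {F : ι → ℂ → ℂ} (hF : ∀ i, HolOn (F i))
    (hsum : SummableLocallyUniformlyOn (fun i z ↦ w i * F i z) (ball 0 1)) :
    besovEnergy p (fun z ↦ ∑' i, w i * F i z) ≤ ∑' i, ‖w i‖ₑ * besovEnergy p (F i) := by
  have p_nonneg : 0 ≤ p := zero_le_one.trans hp
  have density_eq (z : ℂ) (f : ℂ → ℂ) (hz : z ∈ ball 0 1) :
      .ofReal ((1 - ‖z‖) ^ (p - 2) * ‖deriv f z‖ ^ p) =
        ENNReal.ofReal ((1 - ‖z‖) ^ (p - 2)) * ‖deriv f z‖ₑ ^ p := by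
    have : 0 ≤ 1 - ‖z‖ := sub_nonneg.2 (mem_ball_zero_iff.1 hz).le
    rw [ENNReal.ofReal_mul (by positivity), ← ENNReal.ofReal_rpow_of_nonneg (norm_nonneg _)
      p_nonneg, ofReal_norm]
  have jensen : ∀ z ∈ ball (0 : ℂ) 1, ‖deriv (fun z ↦ ∑' i, w i * F i z) z‖ₑ ^ p ≤
      ∑' i, ‖w i‖ₑ * ‖deriv (F i) z‖ₑ ^ p := by
    intro z hz
    have deriv_sum := hasSum_deriv_of_summableLocallyUniformlyOn isOpen_ball
      (fun i ↦ (hF i).const_mul (w i)) hsum hz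
    simp only [deriv_const_mul_field] at deriv_sum
    refine (ENNReal.rpow_le_rpow ?_ p_nonneg).trans
      (rpow_tsum_mul_le_tsum_mul_rpow hp hw _)
    simpa only [deriv_sum.tsum_eq, enorm_mul] using enorm_tsum_le_tsum_enorm
      (f := fun i ↦ w i * deriv (F i) z)
  calc besovEnergy p (fun z ↦ ∑' i, w i * F i z)
      ≤ ∫⁻ z in ball 0 1,
          ∑' i, ‖w i‖ₑ * .ofReal ((1 - ‖z‖) ^ (p - 2) * ‖deriv (F i) z‖ ^ p) ∂dA := by
        refine setLIntegral_mono' measurableSet_ball fun z hz ↦ ?_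
        simp only [density_eq z _ hz, mul_left_comm ‖w _‖ₑ, ENNReal.tsum_mul_left]
        gcongr
        exact jensen z hz
    _ = ∑' i, ‖w i‖ₑ * besovEnergy p (F i) := by
        have measurable_density (i : ι) :
            Measurable fun z ↦ ENNReal.ofReal ((1 - ‖z‖) ^ (p - 2) * ‖deriv (F i) z‖ ^ p) := by
          have := measurable_deriv (F i)
          fun_prop
        rw [lintegral_tsum fun i ↦ ((measurable_density i).const_mul _).aemeasurable]
        exact tsum_congr fun i ↦ lintegral_const_mul _ (measurable_density i)

theorem re_le_norm_tsum_of_re_nonneg {ι : Type*} {h : ι → ℂ} (hsum : Summable h)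
    (hre : ∀ i, 0 ≤ (h i).re) (i : ι) : (h i).re ≤ ‖∑' j, h j‖ :=
  (le_hasSum (Complex.hasSum_re hsum.hasSum) i fun j _ ↦ hre j).trans (Complex.re_le_norm _)

theorem summableLocallyUniformlyOn_mul_logTestFun {ι : Type*} {β : ℝ} (hβ : β ≤ 0) {w : ι → ℂ}
    (hw : Summable (‖w ·‖)) {a : ι → ℂ} (ha : ∀ i, ‖a i‖ < 1) :
    SummableLocallyUniformlyOn (fun i z ↦ w i * logTestFun β (a i) z) (ball 0 1) := by
  refine SummableLocallyUniformlyOn_of_locally_bounded isOpen_ball fun K hK K_compact ↦ ?_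
  obtain ⟨R, hR, hKR⟩ := exists_lt_subset_ball K_compact.isClosed hK
  refine ⟨fun i ↦ ‖w i‖ * (Real.log 2 ^ β * (Real.log (2 / (1 - R)) + π)), hw.mul_right _,
    fun i z hz ↦ ?_⟩
  have weight_le : ‖((logWeight (a i) ^ β : ℝ) : ℂ)‖ ≤ Real.log 2 ^ β := by
    rw [Complex.norm_of_nonneg (Real.rpow_nonneg (logWeight_pos (ha i)).le _)]
    exact Real.rpow_le_rpow_of_nonpos (Real.log_pos one_lt_two) (log_two_le_logWeight (ha i)) hβ
  calc ‖w i * logTestFun β (a i) z‖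
      = ‖w i‖ * (‖((logWeight (a i) ^ β : ℝ) : ℂ)‖ * ‖logKernel (a i) z‖) := by
        rw [norm_mul, logTestFun, norm_mul]
    _ ≤ ‖w i‖ * (Real.log 2 ^ β * (Real.log (2 / (1 - R)) + π)) := by
        gcongr
        exact norm_logKernel_le (ha i).le hR (mem_ball_zero_iff.1 (hKR hz)).le

theorem exists_mem_Besov_forall_mul_re_logTestFun_le {ι : Type*} [Countable ι] {p : ℝ}
    (hp : 1 < p) {a : ι → ℂ} (ha : ∀ i, ‖a i‖ < 1) {w : ι → ℝ} (hw₀ : ∀ i, 0 ≤ w i)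
    (hw₁ : ∑' i, .ofReal (w i) ≤ (1 : ℝ≥0∞)) :
    ∃ f ∈ Besov p, ∀ i z, ‖z‖ < 1 → w i * (logTestFun (-(1 / p)) (a i) z).re ≤ ‖f z‖ := by
  let F : ι → ℂ → ℂ := fun i ↦ logTestFun (-(1 / p)) (a i)
  have F_hol (i : ι) : HolOn (F i) := holOn_logTestFun _ (ha i).le
  have enorm_w (i : ι) : ‖(w i : ℂ)‖ₑ = .ofReal (w i) := by
    rw [← ofReal_norm, Complex.norm_of_nonneg (hw₀ i)]
  have tsum_enorm_le : ∑' i, ‖(w i : ℂ)‖ₑ ≤ 1 := by simpa only [enorm_w] using hw₁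
  have summable : SummableLocallyUniformlyOn (fun i z ↦ w i * F i z) (ball 0 1) :=
    summableLocallyUniformlyOn_mul_logTestFun (neg_nonpos.2 (by positivity))
      (tsum_enorm_ne_top_iff_summable_norm.1 (ne_top_of_le_ne_top ENNReal.one_ne_top tsum_enorm_le))
      ha
  refine ⟨fun z ↦ ∑' i, w i * F i z, mem_Besov_iff.2 ⟨?_, ?_⟩, fun i z hz ↦ ?_⟩
  · exact summable.differentiableOn isOpen_ball fun i z hz ↦
      ((F_hol i).const_mul (w i : ℂ)).differentiableAt (isOpen_ball.mem_nhds hz)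
  · obtain ⟨C, hC⟩ := exists_forall_besovEnergy_logTestFun_le hp
    calc besovEnergy p (fun z ↦ ∑' i, w i * F i z)
        ≤ ∑' i, ‖(w i : ℂ)‖ₑ * besovEnergy p (F i) :=
          besovEnergy_tsum_le hp.le tsum_enorm_le F_hol summable
      _ ≤ ∑' i, ‖(w i : ℂ)‖ₑ * .ofReal C := by gcongr with i; exact hC (a i) (ha i)
      _ ≤ 1 * .ofReal C := by rw [ENNReal.tsum_mul_right]; gcongr
      _ < ⊤ := by rw [one_mul]; exact ENNReal.ofReal_lt_top
  · have term_re (j : ι) : (w j * F j z).re = w j * (F j z).re := re_ofReal_mul _ _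
    rw [← term_re]
    refine re_le_norm_tsum_of_re_nonneg (summable.summable (mem_ball_zero_iff.2 hz))
      (fun j ↦ ?_) i
    rw [term_re]
    exact mul_nonneg (hw₀ j) (re_logTestFun_nonneg _ (ha j) hz)

theorem hasDerivAt_mul_integral_segment {h : ℂ → ℂ} {R : ℝ} (hh : DifferentiableOn ℂ h (ball 0 R))
    {z : ℂ} (hz : z ∈ ball 0 R) :
    HasDerivAt (fun w ↦ w * ∫ t in (0 : ℝ)..1, h (t * w)) (h z) z := by
  obtain ⟨H, hH⟩ := hh.isExactOn_ball
  have segment_subset : ∀ w ∈ ball (0 : ℂ) R, ∀ t ∈ Icc (0 : ℝ) 1, t * w ∈ ball (0 : ℂ) R := by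
    intro w hw t ht
    rw [mem_ball_zero_iff] at hw ⊢
    rw [norm_mul, Complex.norm_of_nonneg ht.1]
    exact (mul_le_of_le_one_left (norm_nonneg w) ht.2).trans_lt hw
  have eq_primitive : ∀ w ∈ ball (0 : ℂ) R, w * ∫ t in (0 : ℝ)..1, h (t * w) = H w - H 0 := by
    intro w hw
    have h_continuous : ContinuousOn (fun t : ℝ ↦ h (t * w)) (Icc 0 1) :=
      hh.continuousOn.comp (by fun_prop) (segment_subset w hw)
    have h_deriv : ∀ t ∈ Icc (0 : ℝ) 1, HasDerivAt H (h (t * w)) (t * w) := fun t ht ↦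
      hH _ (segment_subset w hw t ht)
    simpa using intervalIntegral.integral_unitInterval_deriv_eq_sub (f := H) (f' := h)
      (z₀ := 0) (z₁ := w) (by simpa using h_continuous) (by simpa using h_deriv)
  exact ((hH z hz).sub_const (H 0)).congr_of_eventuallyEq
    (eventuallyEq_of_mem (isOpen_ball.mem_nhds hz) eq_primitive)

theorem deriv_Tg {g f : ℂ → ℂ} (hg : HolOn g) (hf : HolOn f) {z : ℂ} (hz : z ∈ ball (0 : ℂ) 1) :
    deriv (Tg g f) z = deriv g z * f z :=
  (hasDerivAt_mul_integral_segment ((hg.deriv isOpen_ball).mul hf) hz).deriv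

theorem qEnergy_Tg {s : ℝ} {a : ℂ} {g f : ℂ → ℂ} (hg : HolOn g) (hf : HolOn f) :
    qEnergy s a (Tg g f) =
      ∫⁻ z in ball 0 1, .ofReal (‖deriv g z * f z‖ ^ 2 * (1 - ‖phi a z‖ ^ 2) ^ s) ∂dA :=
  setLIntegral_congr_fun measurableSet_ball fun z hz ↦ by rw [deriv_Tg hg hf hz]

theorem const_mem_Besov {p : ℝ} (hp : p ≠ 0) (c : ℂ) : (fun _ ↦ c) ∈ Besov p :=
  mem_Besov_iff.2 ⟨differentiableOn_const c, by simp [besovEnergy, Real.zero_rpow hp]⟩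

theorem qEnergy_lt_top_of_mem_Qs {s : ℝ} {f : ℂ → ℂ} (hf : f ∈ Qs s) {a : ℂ} (ha : ‖a‖ < 1) :
    qEnergy s a f < ⊤ :=
  (le_iSup₂ (f := fun b _ ↦ qEnergy s b f) a (mem_ball_zero_iff.2 ha)).trans_lt
    (mem_Qs_iff.1 hf).2

theorem qEnergy_lt_top_of_mapsInto_Tg {p s : ℝ} (hp : p ≠ 0) {g : ℂ → ℂ} (hg : HolOn g)
    (h : MapsInto (Tg g) (Besov p) (Qs s)) {a : ℂ} (ha : ‖a‖ < 1) : qEnergy s a g < ⊤ := by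
  have energy_eq : qEnergy s a (Tg g fun _ ↦ 1) = qEnergy s a g := by
    rw [qEnergy_Tg hg (differentiableOn_const 1)]
    simp only [mul_one, qEnergy]
  exact energy_eq ▸ qEnergy_lt_top_of_mem_Qs (h _ (const_mem_Besov hp 1)) ha

section WeightComparison

variable {a z : ℂ}

theorem norm_phi_zero (z : ℂ) : ‖phi 0 z‖ = ‖z‖ := by simp [phi]

theorem one_sub_norm_phi_sq (ha : ‖a‖ ≤ 1) (hz : ‖z‖ < 1) :
    1 - ‖phi a z‖ ^ 2 = (1 - ‖a‖ ^ 2) * (1 - ‖z‖ ^ 2) / ‖1 - conj a * z‖ ^ 2 := by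
  have denom_pos := norm_one_sub_conj_mul_pos ha hz
  rw [phi, norm_div, div_pow, eq_div_iff (by positivity), sub_mul,
    div_mul_cancel₀ _ (by positivity)]
  simp only [← Complex.normSq_eq_norm_sq, Complex.normSq_apply, Complex.sub_re, Complex.sub_im,
    Complex.mul_re, Complex.mul_im, Complex.conj_re, Complex.conj_im, Complex.one_re,
    Complex.one_im]
  ring

theorem one_sub_norm_phi_sq_nonneg (ha : ‖a‖ ≤ 1) (hz : ‖z‖ < 1) : 0 ≤ 1 - ‖phi a z‖ ^ 2 := by
  have ha₂ : 0 ≤ 1 - ‖a‖ ^ 2 := sub_nonneg.2 (pow_le_one₀ (norm_nonneg a) ha)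
  have hz₂ : 0 ≤ 1 - ‖z‖ ^ 2 := sub_nonneg.2 (pow_le_one₀ (norm_nonneg z) hz.le)
  rw [one_sub_norm_phi_sq ha hz]
  positivity

theorem mul_logWeight_le_re_logKernel {η : ℝ} (hη : η ≤ 1) (ha : ‖a‖ < 1) (hz : ‖z‖ < 1)
    (near : ‖1 - conj a * z‖ ≤ (1 - ‖a‖) ^ η) : η * logWeight a ≤ (logKernel a z).re := by
  have denom_pos := norm_one_sub_conj_mul_pos ha.le hz
  have log_le := Real.log_le_log denom_pos near
  rw [Real.log_rpow (sub_pos.2 ha)] at log_le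
  rw [re_logKernel, logWeight, Real.log_div two_ne_zero (sub_pos.2 ha).ne',
    Real.log_div two_ne_zero denom_pos.ne']
  nlinarith [Real.log_pos one_lt_two]

theorem one_sub_norm_phi_sq_le {η : ℝ} (ha : ‖a‖ < 1) (hz : ‖z‖ < 1)
    (far : (1 - ‖a‖) ^ η ≤ ‖1 - conj a * z‖) :
    1 - ‖phi a z‖ ^ 2 ≤ 2 * (1 - ‖a‖) ^ (1 - 2 * η) * (1 - ‖z‖ ^ 2) := by
  have a_pos : 0 < 1 - ‖a‖ := sub_pos.2 ha
  have z_nonneg : 0 ≤ 1 - ‖z‖ ^ 2 := sub_nonneg.2 (pow_le_one₀ (norm_nonneg z) hz.le)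
  have denom_pos := norm_one_sub_conj_mul_pos ha.le hz
  have split_power : 1 - ‖a‖ = (1 - ‖a‖) ^ (1 - 2 * η) * ((1 - ‖a‖) ^ η) ^ 2 := by
    rw [← Real.rpow_mul_natCast a_pos.le, ← Real.rpow_add a_pos, Nat.cast_ofNat, mul_comm η,
      sub_add_cancel, Real.rpow_one]
  rw [one_sub_norm_phi_sq ha.le hz, div_le_iff₀ (by positivity)]
  calc (1 - ‖a‖ ^ 2) * (1 - ‖z‖ ^ 2)
      ≤ 2 * (1 - ‖a‖) * (1 - ‖z‖ ^ 2) := by gcongr; nlinarith [norm_nonneg a]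
    _ = 2 * ((1 - ‖a‖) ^ (1 - 2 * η) * ((1 - ‖a‖) ^ η) ^ 2) * (1 - ‖z‖ ^ 2) := by
        rw [← split_power]
    _ ≤ 2 * ((1 - ‖a‖) ^ (1 - 2 * η) * ‖1 - conj a * z‖ ^ 2) * (1 - ‖z‖ ^ 2) := by gcongr
    _ = 2 * (1 - ‖a‖) ^ (1 - 2 * η) * (1 - ‖z‖ ^ 2) * ‖1 - conj a * z‖ ^ 2 := by ring

theorem exists_forall_logWeight_rpow_mul_le {β τ : ℝ} (hβ : 0 < β) (hτ : 0 < τ) :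
    ∃ C, 0 ≤ C ∧ ∀ a : ℂ, ‖a‖ < 1 → logWeight a ^ β * (1 - ‖a‖) ^ τ ≤ C := by
  refine ⟨2 ^ τ / (τ / β) ^ β, by positivity, fun a ha ↦ ?_⟩
  have a_pos : 0 < 1 - ‖a‖ := sub_pos.2 ha
  have quot_nonneg : 0 ≤ 2 / (1 - ‖a‖) := by positivity
  calc logWeight a ^ β * (1 - ‖a‖) ^ τ
      ≤ ((2 / (1 - ‖a‖)) ^ (τ / β) / (τ / β)) ^ β * (1 - ‖a‖) ^ τ := by
        gcongr
        · exact (logWeight_pos ha).le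
        · exact Real.log_le_rpow_div quot_nonneg (by positivity)
    _ = 2 ^ τ / (τ / β) ^ β := by
        rw [Real.div_rpow (by positivity) (by positivity), ← Real.rpow_mul quot_nonneg,
          div_mul_cancel₀ _ hβ.ne', Real.div_rpow two_pos.le a_pos.le]
        field_simp

theorem logWeight_rpow_le_sq_re_logTestFun {α : ℝ} (ha : ‖a‖ < 1) (hz : ‖z‖ < 1)
    (near : ‖1 - conj a * z‖ ≤ (1 - ‖a‖) ^ (1 / 4 : ℝ)) :
    logWeight a ^ (2 * α) ≤ 16 * (logTestFun (α - 1) a z).re ^ 2 := by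
  have weight_pos := logWeight_pos ha
  calc logWeight a ^ (2 * α) = 16 * (logWeight a ^ (α - 1) * (1 / 4 * logWeight a)) ^ 2 := by
        rw [Real.rpow_sub_one weight_pos.ne', mul_comm 2 α, ← Nat.cast_ofNat,
          Real.rpow_mul_natCast weight_pos.le]
        field_simp
        norm_num
    _ ≤ 16 * (logTestFun (α - 1) a z).re ^ 2 := by
        rw [re_logTestFun]
        gcongr
        exact mul_logWeight_le_re_logKernel (by norm_num) ha hz near

/-- Near `a / ‖a‖` the test function has the size of the weight; away from it the Möbius weight
`1 - |φ_a|²` carries a positive power of `1 - |a|`, which absorbs every power of the logarithm. -/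
theorem exists_forall_logWeight_rpow_mul_phi_rpow_le {s α : ℝ} (hs : 0 < s) (hα : 0 < α) :
    ∃ C, 0 ≤ C ∧ ∀ a z : ℂ, ‖a‖ < 1 → ‖z‖ < 1 →
      logWeight a ^ (2 * α) * (1 - ‖phi a z‖ ^ 2) ^ s ≤
        16 * (logTestFun (α - 1) a z).re ^ 2 * (1 - ‖phi a z‖ ^ 2) ^ s +
          C * (1 - ‖z‖ ^ 2) ^ s := by
  obtain ⟨C, C_nonneg, hC⟩ := exists_forall_logWeight_rpow_mul_le (β := 2 * α) (τ := s / 2)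
    (by positivity) (by positivity)
  refine ⟨2 ^ s * C, by positivity, fun a z ha hz ↦ ?_⟩
  have a_pos : 0 < 1 - ‖a‖ := sub_pos.2 ha
  have z_nonneg : 0 ≤ 1 - ‖z‖ ^ 2 := sub_nonneg.2 (pow_le_one₀ (norm_nonneg z) hz.le)
  have phi_nonneg := one_sub_norm_phi_sq_nonneg ha.le hz
  rcases le_total ‖1 - conj a * z‖ ((1 - ‖a‖) ^ (1 / 4 : ℝ)) with near | far
  · refine le_add_of_le_of_nonneg ?_ (by positivity)
    gcongr
    exact logWeight_rpow_le_sq_re_logTestFun ha hz near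
  · refine le_add_of_nonneg_of_le (by positivity) ?_
    have weight_nonneg := (logWeight_pos ha).le
    calc logWeight a ^ (2 * α) * (1 - ‖phi a z‖ ^ 2) ^ s
        ≤ logWeight a ^ (2 * α) * (2 * (1 - ‖a‖) ^ (1 / 2 : ℝ) * (1 - ‖z‖ ^ 2)) ^ s := by
          gcongr
          convert one_sub_norm_phi_sq_le ha hz far using 3
          norm_num
      _ = 2 ^ s * (logWeight a ^ (2 * α) * (1 - ‖a‖) ^ (s / 2)) * (1 - ‖z‖ ^ 2) ^ s := by
          rw [Real.mul_rpow (by positivity) z_nonneg, Real.mul_rpow two_pos.le (by positivity),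
            ← Real.rpow_mul a_pos.le, one_div_mul_eq_div]
          ring
      _ ≤ 2 ^ s * C * (1 - ‖z‖ ^ 2) ^ s := by
          gcongr
          exact hC a ha

end WeightComparison

theorem measurable_qEnergy_integrand (s : ℝ) (a : ℂ) (f : ℂ → ℂ) :
    Measurable fun z ↦ ENNReal.ofReal (‖deriv f z‖ ^ 2 * (1 - ‖phi a z‖ ^ 2) ^ s) := by
  have := measurable_deriv f
  unfold phi
  fun_prop

theorem exists_forall_logWeight_rpow_mul_qEnergy_le {s α : ℝ} (hs : 0 < s) (hα : 0 < α) :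
    ∃ C : ℝ, ∀ (g f : ℂ → ℂ) (a : ℂ) (t : ℝ), HolOn g → HolOn f → ‖a‖ < 1 →
      (∀ z, ‖z‖ < 1 → (logTestFun (α - 1) a z).re ≤ t * ‖f z‖) →
      .ofReal (logWeight a ^ (2 * α)) * qEnergy s a g ≤
        .ofReal C * qEnergy s 0 g + .ofReal (16 * t ^ 2) * qEnergy s a (Tg g f) := by
  obtain ⟨C, C_nonneg, hC⟩ := exists_forall_logWeight_rpow_mul_phi_rpow_le hs hα
  refine ⟨C, fun g f a t hg hf ha dominated ↦ ?_⟩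
  have pointwise : ∀ z ∈ ball (0 : ℂ) 1,
      logWeight a ^ (2 * α) * (‖deriv g z‖ ^ 2 * (1 - ‖phi a z‖ ^ 2) ^ s) ≤
        C * (‖deriv g z‖ ^ 2 * (1 - ‖phi 0 z‖ ^ 2) ^ s) +
          16 * t ^ 2 * (‖deriv g z * f z‖ ^ 2 * (1 - ‖phi a z‖ ^ 2) ^ s) := by
    intro z hz
    rw [mem_ball_zero_iff] at hz
    have phi_nonneg := one_sub_norm_phi_sq_nonneg ha.le hz
    have sq_le : (logTestFun (α - 1) a z).re ^ 2 ≤ (t * ‖f z‖) ^ 2 :=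
      pow_le_pow_left₀ (re_logTestFun_nonneg _ ha hz) (dominated z hz) 2
    calc logWeight a ^ (2 * α) * (‖deriv g z‖ ^ 2 * (1 - ‖phi a z‖ ^ 2) ^ s)
        = ‖deriv g z‖ ^ 2 * (logWeight a ^ (2 * α) * (1 - ‖phi a z‖ ^ 2) ^ s) := by ring
      _ ≤ ‖deriv g z‖ ^ 2 * (16 * (t * ‖f z‖) ^ 2 * (1 - ‖phi a z‖ ^ 2) ^ s +
            C * (1 - ‖z‖ ^ 2) ^ s) := by
          gcongr
          exact (hC a z ha hz).trans (by gcongr)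
      _ = _ := by rw [norm_mul, norm_phi_zero]; ring
  rw [qEnergy_Tg hg hf]
  simp only [qEnergy, ← lintegral_const_mul' _ _ ENNReal.ofReal_ne_top]
  rw [← lintegral_add_left ((measurable_qEnergy_integrand s 0 g).const_mul _)]
  refine setLIntegral_mono' measurableSet_ball fun z hz ↦ ?_
  have phi_zero_nonneg := one_sub_norm_phi_sq_nonneg (norm_zero.trans_le zero_le_one)
    (mem_ball_zero_iff.1 hz)
  have phi_nonneg := one_sub_norm_phi_sq_nonneg ha.le (mem_ball_zero_iff.1 hz)
  have weight_nonneg := (logWeight_pos ha).le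
  rw [← ENNReal.ofReal_mul (by positivity), ← ENNReal.ofReal_mul (by positivity),
    ← ENNReal.ofReal_mul (by positivity), ← ENNReal.ofReal_add (by positivity) (by positivity)]
  exact ENNReal.ofReal_le_ofReal (pointwise z hz)

theorem biSup_lt_top_of_forall_seq {ι : Type*} {S : Set ι} {F : ι → ℝ≥0∞} {c : ℕ → ℝ≥0∞}
    (hc : ∀ k, c k ≠ ⊤)
    (h : ∀ a : ℕ → ι, (∀ k, a k ∈ S) → ∃ B < ⊤, ∀ k, F (a k) ≤ c k * B) :
    ⨆ i ∈ S, F i < ⊤ := by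
  by_contra sup_not_lt
  have exists_large (k : ℕ) : ∃ i ∈ S, c k * k < F i :=
    lt_biSup_iff.1 ((ENNReal.mul_lt_top (hc k).lt_top (ENNReal.natCast_lt_top k)).trans_le
      (not_lt.1 sup_not_lt))
  choose a ha large using exists_large
  obtain ⟨B, B_lt_top, hB⟩ := h a ha
  obtain ⟨n, hn⟩ := ENNReal.exists_nat_gt B_lt_top.ne
  exact hn.not_gt (lt_of_mul_lt_mul_left' ((large n).trans_le (hB n)))

theorem tsum_ofReal_inv_two_pow_succ : ∑' k : ℕ, ENNReal.ofReal (2 ^ (k + 1))⁻¹ = 1 := by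
  have term_eq (k : ℕ) : ENNReal.ofReal (2 ^ (k + 1))⁻¹ = 2⁻¹ ^ (k + 1) := by
    rw [ENNReal.ofReal_inv_of_pos (by positivity), ENNReal.ofReal_pow two_pos.le,
      ENNReal.ofReal_ofNat, ENNReal.inv_pow]
  simp only [term_eq, ENNReal.tsum_geometric_add_one, ENNReal.one_sub_inv_two, inv_inv]
  exact ENNReal.inv_mul_cancel two_ne_zero ENNReal.ofNat_ne_top

theorem stmt6_general (p p' s : ℝ) (hp : 1 < p) (hpp' : 1 / p + 1 / p' = 1) (hs : 0 < s)
    (g : ℂ → ℂ) (hg : HolOn g) (h : MapsInto (Tg g) (Besov p) (Qs s)) :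
    g ∈ QsLog s (1 / p') := by
  have exponent_eq : -(1 / p) = 1 / p' - 1 := by linarith
  have exponent_pos : 0 < 1 / p' := by linarith [(div_lt_one (one_pos.trans hp)).2 hp]
  obtain ⟨C, hC⟩ := exists_forall_logWeight_rpow_mul_qEnergy_le hs exponent_pos
  refine mem_QsLog_iff.2 ⟨hg, biSup_lt_top_of_forall_seq (c := fun k ↦ .ofReal ((2 ^ (k + 1)) ^ 2))
    (fun _ ↦ ENNReal.ofReal_ne_top) fun a ha ↦ ?_⟩
  simp only [mem_ball_zero_iff] at ha
  obtain ⟨f, hf, dominates⟩ := exists_mem_Besov_forall_mul_re_logTestFun_le hp ha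
    (w := fun k : ℕ ↦ (2 ^ (k + 1))⁻¹) (fun k ↦ by positivity) tsum_ofReal_inv_two_pow_succ.le
  rw [exponent_eq] at dominates
  have g_energy : qEnergy s 0 g < ⊤ := qEnergy_lt_top_of_mapsInto_Tg (by linarith) hg h (by simp)
  have Tg_energy := (mem_Qs_iff.1 (h f hf)).2
  refine ⟨.ofReal C * qEnergy s 0 g + 16 * ⨆ b ∈ ball (0 : ℂ) 1, qEnergy s b (Tg g f),
    by finiteness, fun k ↦ (hC g f (a k) (2 ^ (k + 1)) hg hf.1 (ha k) fun z hz ↦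
      (inv_mul_le_iff₀ (by positivity)).1 (dominates k z hz)).trans ?_⟩
  have one_le : 1 ≤ ENNReal.ofReal ((2 ^ (k + 1)) ^ 2) :=
    ENNReal.one_le_ofReal.2 (one_le_pow₀ (one_le_pow₀ one_le_two))
  rw [mul_comm 16, ENNReal.ofReal_mul (by positivity), ENNReal.ofReal_ofNat, mul_assoc, mul_add]
  refine add_le_add (le_mul_of_one_le_left' one_le) (mul_le_mul_right ?_ _)
  exact mul_le_mul_right (le_iSup₂ (f := fun b _ ↦ qEnergy s b _) _ (mem_ball_zero_iff.2 (ha k))) _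

/-- For `1 < p < ∞`, `0 < s ≤ 1`, `p'` the conjugate exponent of `p`, and
`g` holomorphic on the unit disc: if `T_g` maps `Bᵖ` into `Q_s` then `g ∈ Q_{s,log,1/p'}`. -/
theorem stmt6 (p p' s : ℝ) (hp : 1 < p) (hpp' : 1 / p + 1 / p' = 1)
    (hs0 : 0 < s) (hs1 : s ≤ 1) (g : ℂ → ℂ) (hg : HolOn g)
    (h : MapsInto (Tg g) (Besov p) (Qs s)) :
    g ∈ QsLog s (1 / p') := by
  exact stmt6_general p p' s hp hpp' hs0 g hg h
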